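/- Let n ≤ q be positive integers, let μ be the probability measure on n×q real matrices under which all entries are i.i.d. standard Gaussian N(0,1), and for each j ∈ {0,…,n−1} let χ²_{q−j} denote the chi-squared distribution with q−j degrees of freedom, i.e., the Gamma distribution with shape (q−j)/2 and rate 1/2. Then the pushforward of μ under the map X ↦ det(X Xᵀ) equals the pushforward of the product measure ⊗_{j=0}^{n−1} χ²_{q−j} under the map y ↦ ∏_{j=0}^{n−1} y_j. -/

import Mathlib

open MeasureTheory ProbabilityTheory Matrix

/-!
Appending a vector `x` to `v₁, …, vₙ` multiplies their Gram determinant by the squared distance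
from `x` to the span of the `vᵢ`. When the `vᵢ` are linearly independent and `x` is standard
Gaussian in dimension `q`, the projection of `x` on the orthogonal complement of this span is
standard Gaussian in dimension `q - n`, so this factor is `χ²` with `q - n` degrees of freedom
whatever the `vᵢ` are. Hence the law of the determinant is an iterated multiplicative convolution
of chi-squared laws. The law of the squared norm of a Gaussian vector is read off its moment
generating function.
-/

open Module Filter Topology

section MomentGeneratingFunction

theorem eq_of_mgf_eventuallyEq {μ ν : Measure ℝ} [IsProbabilityMeasure μ] [IsProbabilityMeasure ν]
    (h0 : 0 ∈ interior (integrableExpSet id μ)) (h : mgf id μ =ᶠ[𝓝 0] mgf id ν) : μ = ν := by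
  have h0' : 0 ∈ interior (integrableExpSet id ν) := by
    rw [mem_interior_iff_mem_nhds] at h0 ⊢
    filter_upwards [h0, h] with t ht hmgf
    exact mgf_pos_iff.1 (hmgf ▸ mgf_pos ht)
  set I := interior (integrableExpSet id μ) ∩ interior (integrableExpSet id ν)
  have hI : Convex ℝ I := convex_integrableExpSet.interior.inter convex_integrableExpSet.interior
  have hfreq : ∃ᶠ z in 𝓝[≠] (0 : ℂ), complexMGF id μ z = complexMGF id ν z := by
    have htendsto : Tendsto ((↑) : ℝ → ℂ) (𝓝[≠] 0) (𝓝[≠] 0) :=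
      tendsto_nhdsWithin_of_tendsto_nhds_of_eventually_within _
        (Complex.continuous_ofReal.tendsto' 0 0 rfl |>.mono_left nhdsWithin_le_nhds)
        (eventually_nhdsWithin_of_forall fun _ ht ↦ Complex.ofReal_ne_zero.2 ht)
    refine htendsto.frequently (h.filter_mono nhdsWithin_le_nhds |>.mono fun t ht ↦ ?_).frequently
    rw [complexMGF_ofReal, complexMGF_ofReal, ht]
  -- The identity theorem on the common vertical strip, which contains the imaginary axis.
  have heq : Set.EqOn (complexMGF id μ) (complexMGF id ν) {z | z.re ∈ I} :=
    (analyticOnNhd_complexMGF.mono fun _ hz ↦ hz.1).eqOn_of_preconnected_of_frequently_eq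
      (analyticOnNhd_complexMGF.mono fun _ hz ↦ hz.2)
      (hI.linear_preimage Complex.reLm).isPreconnected ⟨h0, h0'⟩ hfreq
  refine Measure.ext_of_charFun (funext fun t ↦ ?_)
  rw [← complexMGF_id_mul_I, ← complexMGF_id_mul_I]
  exact heq (by simpa using show 0 ∈ I from ⟨h0, h0'⟩)

end MomentGeneratingFunction

section Gamma

variable {a r t : ℝ}

theorem integral_gammaMeasure (ha : 0 < a) (hr : 0 < r) {F : Type*}
    [NormedAddCommGroup F] [NormedSpace ℝ F] (f : ℝ → F) :
    ∫ x, f x ∂gammaMeasure a r =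
      ∫ x in Set.Ioi 0, (r ^ a / Real.Gamma a * (x ^ (a - 1) * Real.exp (-(r * x)))) • f x := by
  rw [gammaMeasure, integral_withDensity_eq_integral_toReal_smul (f := gammaPDF a r)
    (measurable_gammaPDFReal a r).ennreal_ofReal
      (ae_of_all _ fun _ ↦ ENNReal.ofReal_lt_top), ← integral_Ici_eq_integral_Ioi,
      ← integral_indicator measurableSet_Ici]
  congr 1 with x
  rw [gammaPDF, ENNReal.toReal_ofReal (gammaPDFReal_nonneg ha hr x), gammaPDFReal]
  simp only [Set.indicator, Set.mem_Ici, ite_smul, zero_smul, mul_assoc]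

theorem mgf_id_gammaMeasure (ha : 0 < a) (hr : 0 < r) (ht : t < r) :
    mgf id (gammaMeasure a r) t = (r / (r - t)) ^ a := by
  have hrt : 0 < r - t := sub_pos.2 ht
  have hΓ : Real.Gamma a ≠ 0 := (Real.Gamma_pos_of_pos ha).ne'
  calc mgf id (gammaMeasure a r) t
    _ = r ^ a / Real.Gamma a * ∫ x in Set.Ioi 0, x ^ (a - 1) * Real.exp (-((r - t) * x)) := by
      rw [mgf, integral_gammaMeasure ha hr, ← integral_const_mul]
      congr 1 with x
      rw [smul_eq_mul, id, mul_assoc, mul_assoc, ← Real.exp_add]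
      ring_nf
    _ = (r / (r - t)) ^ a := by
      rw [Real.integral_rpow_mul_exp_neg_mul_Ioi ha hrt, div_eq_mul_one_div r,
        Real.mul_rpow hr.le (by positivity)]
      field_simp

theorem integrable_exp_mul_gammaMeasure (ha : 0 < a) (hr : 0 < r) (ht : t < r) :
    Integrable (fun x ↦ Real.exp (t * x)) (gammaMeasure a r) := by
  have := isProbabilityMeasure_gammaMeasure ha hr
  refine mgf_pos_iff (X := id).1 ?_
  rw [mgf_id_gammaMeasure ha hr ht]
  exact Real.rpow_pos_of_pos (div_pos hr (sub_pos.2 ht)) a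

theorem eq_gammaMeasure_of_mgf {μ : Measure ℝ} [IsProbabilityMeasure μ] (ha : 0 < a) (hr : 0 < r)
    (h : ∀ t < r, mgf id μ t = (r / (r - t)) ^ a) : μ = gammaMeasure a r := by
  have := isProbabilityMeasure_gammaMeasure ha hr
  have hnhds : Set.Iio r ∈ 𝓝 (0 : ℝ) := Iio_mem_nhds hr
  symm
  refine eq_of_mgf_eventuallyEq (mem_interior_iff_mem_nhds.2 ?_) ?_
  · filter_upwards [hnhds] with t ht using integrable_exp_mul_gammaMeasure ha hr ht
  · filter_upwards [hnhds] with t ht using (mgf_id_gammaMeasure ha hr ht).trans (h t ht).symm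

theorem map_sum_pi_gammaMeasure {ι : Type*} [Fintype ι] [Nonempty ι] {a : ι → ℝ}
    (ha : ∀ i, 0 < a i) (hr : 0 < r) :
    (Measure.pi fun i ↦ gammaMeasure (a i) r).map (fun x ↦ ∑ i, x i) =
      gammaMeasure (∑ i, a i) r := by
  have (i : ι) := isProbabilityMeasure_gammaMeasure (ha i) hr
  have hmeas : Measurable fun x : ι → ℝ ↦ ∑ i, x i := by fun_prop
  have := Measure.isProbabilityMeasure_map
    (μ := Measure.pi fun i ↦ gammaMeasure (a i) r) hmeas.aemeasurable
  refine eq_gammaMeasure_of_mgf (Finset.sum_pos (fun i _ ↦ ha i) Finset.univ_nonempty) hr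
    fun t ht ↦ ?_
  have hrt : 0 < r / (r - t) := div_pos hr (sub_pos.2 ht)
  calc mgf id ((Measure.pi fun i ↦ gammaMeasure (a i) r).map (fun x ↦ ∑ i, x i)) t
    _ = ∏ i, mgf id (gammaMeasure (a i) r) t := by
      rw [mgf_id_map hmeas.aemeasurable]
      simp_rw [mgf, Finset.mul_sum, Real.exp_sum]
      exact integral_fintype_prod_eq_prod (fun _ x ↦ Real.exp (t * x))
    _ = (r / (r - t)) ^ ∑ i, a i := by
      simp_rw [mgf_id_gammaMeasure (ha _) hr ht, Real.rpow_sum_of_pos hrt]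

end Gamma

section ChiSquared

open scoped NNReal

theorem mgf_sq_gaussianReal {v : ℝ≥0} (hv : v ≠ 0) {t : ℝ} (ht : t < (2 * (v : ℝ))⁻¹) :
    mgf (fun x ↦ x ^ 2) (gaussianReal 0 v) t =
      ((2 * (v : ℝ))⁻¹ / ((2 * (v : ℝ))⁻¹ - t)) ^ (1 / 2 : ℝ) := by
  have : 0 < (2 * (v : ℝ))⁻¹ - t := sub_pos.2 ht
  have hv' : (v : ℝ) ≠ 0 := NNReal.coe_ne_zero.2 hv
  calc mgf (fun x ↦ x ^ 2) (gaussianReal 0 v) t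
    _ = (√(2 * Real.pi * v))⁻¹ * ∫ x : ℝ, Real.exp (-((2 * (v : ℝ))⁻¹ - t) * x ^ 2) := by
      rw [mgf, integral_gaussianReal_eq_integral_smul hv, ← integral_const_mul]
      simp_rw [gaussianPDFReal, smul_eq_mul, sub_zero, mul_assoc, ← Real.exp_add]
      congr! 4
      field_simp
      ring
    _ = ((2 * (v : ℝ))⁻¹ / ((2 * (v : ℝ))⁻¹ - t)) ^ (1 / 2 : ℝ) := by
      rw [integral_gaussian, ← Real.sqrt_inv, ← Real.sqrt_mul (by positivity), Real.sqrt_eq_rpow]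
      congr 1
      field_simp

theorem map_sq_gaussianReal {v : ℝ≥0} (hv : v ≠ 0) :
    (gaussianReal 0 v).map (fun x ↦ x ^ 2) = gammaMeasure (1 / 2) (2 * v)⁻¹ := by
  have hmeas : Measurable fun x : ℝ ↦ x ^ 2 := by fun_prop
  have := Measure.isProbabilityMeasure_map (μ := gaussianReal 0 v) hmeas.aemeasurable
  refine eq_gammaMeasure_of_mgf one_half_pos (by positivity) fun t ht ↦ ?_
  rw [mgf_id_map hmeas.aemeasurable, mgf_sq_gaussianReal hv ht]

/-- The chi-squared distribution with `d` degrees of freedom, the law of the squared norm of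
a standard Gaussian vector in dimension `d`. The parameter is real so that `q - j` needs no
truncated subtraction; values `d ≤ 0` are junk. -/
noncomputable def chiSqMeasure (d : ℝ) : Measure ℝ := gammaMeasure (d / 2) (1 / 2)

instance sigmaFinite_chiSqMeasure (d : ℝ) : SigmaFinite (chiSqMeasure d) := by
  unfold chiSqMeasure gammaMeasure gammaPDF
  infer_instance

theorem isProbabilityMeasure_chiSqMeasure {d : ℝ} (hd : 0 < d) :
    IsProbabilityMeasure (chiSqMeasure d) :=
  isProbabilityMeasure_gammaMeasure (half_pos hd) one_half_pos

theorem map_sum_sq_gaussianReal {ι : Type*} [Fintype ι] [Nonempty ι] :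
    (Measure.pi fun _ : ι ↦ gaussianReal 0 1).map (fun x ↦ ∑ i, x i ^ 2) =
      chiSqMeasure (Fintype.card ι) := by
  have h := map_sum_pi_gammaMeasure (ι := ι) (fun _ ↦ one_half_pos) (one_half_pos (α := ℝ))
  have hsq : (gaussianReal 0 1).map (fun x ↦ x ^ 2) = gammaMeasure (1 / 2) (1 / 2) := by
    simpa using map_sq_gaussianReal one_ne_zero
  simp_rw [← hsq] at h
  rw [← Measure.pi_map_pi (by fun_prop), Measure.map_map (by fun_prop) (by fun_prop)] at h
  rw [chiSqMeasure]
  simpa [div_eq_mul_inv, Function.comp_def] using h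

end ChiSquared

section StdGaussian

variable {E : Type*} [NormedAddCommGroup E] [InnerProductSpace ℝ E] [FiniteDimensional ℝ E]
  [MeasurableSpace E] [BorelSpace E]

theorem map_norm_sq_stdGaussian [Nontrivial E] :
    (stdGaussian E).map (fun x ↦ ‖x‖ ^ 2) = chiSqMeasure (finrank ℝ E) := by
  have : Nonempty (Fin (finrank ℝ E)) := Fin.pos_iff_nonempty.1 finrank_pos
  have hnorm (x : Fin (finrank ℝ E) → ℝ) :
      ‖∑ i, x i • stdOrthonormalBasis ℝ E i‖ ^ 2 = ∑ i, x i ^ 2 := by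
    rw [← real_inner_self_eq_norm_sq, (stdOrthonormalBasis ℝ E).orthonormal.inner_sum]
    simp [sq]
  rw [stdGaussian, Measure.map_map (by fun_prop) (by fun_prop)]
  simpa only [Function.comp_def, hnorm, Fintype.card_fin] using
    map_sum_sq_gaussianReal (ι := Fin (finrank ℝ E))

theorem map_orthogonalProjectionOnto_stdGaussian (U : Submodule ℝ E) :
    (stdGaussian E).map U.orthogonalProjectionOnto = stdGaussian U := by
  refine Measure.ext_of_charFun (funext fun t ↦ ?_)
  rw [charFun_apply, integral_map (by fun_prop) (by fun_prop)]
  simp_rw [Submodule.inner_orthogonalProjectionOnto_eq_of_mem_right]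
  rw [← charFun_apply, charFun_stdGaussian, charFun_stdGaussian, Submodule.coe_norm]

end StdGaussian

section Gram

variable {𝕜 E ι κ : Type*} [RCLike 𝕜] [NormedAddCommGroup E] [InnerProductSpace 𝕜 E]

theorem gram_sum_smul [Fintype ι] (A : Matrix ι κ 𝕜) (v : ι → E) :
    gram 𝕜 (fun k ↦ ∑ i, A i k • v i) = Aᴴ * gram 𝕜 v * A := by
  ext k l
  simp only [gram_apply, sum_inner, inner_sum, inner_smul_left, inner_smul_right, mul_apply,
    conjTranspose_apply, Finset.sum_mul, RCLike.star_def]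
  refine Finset.sum_congr rfl fun j _ ↦ ?_
  rw [Finset.mul_sum]
  exact Finset.sum_congr rfl fun i _ ↦ by ring

theorem gram_sumElim_of_inner_eq_zero {v : ι → E} {w : κ → E}
    (h : ∀ i k, inner 𝕜 (v i) (w k) = 0) :
    gram 𝕜 (Sum.elim v w) = fromBlocks (gram 𝕜 v) 0 0 (gram 𝕜 w) := by
  ext (i | k) (j | l)
  · rfl
  · exact h i l
  · exact inner_eq_zero_symm.1 (h j k)
  · rfl

theorem det_gram_sumElim_of_sub_mem_span [Fintype ι] [DecidableEq ι] [Fintype κ] [DecidableEq κ]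
    {v : ι → E} {w x : κ → E} (hvw : ∀ i k, inner 𝕜 (v i) (w k) = 0)
    (hx : ∀ k, x k - w k ∈ Submodule.span 𝕜 (Set.range v)) :
    (gram 𝕜 (Sum.elim v x)).det = (gram 𝕜 v).det * (gram 𝕜 w).det := by
  choose c hc using fun k ↦ (Submodule.mem_span_range_iff_exists_fun 𝕜).1 (hx k)
  set A : Matrix (ι ⊕ κ) (ι ⊕ κ) 𝕜 := fromBlocks 1 (of c)ᵀ 0 1
  have hA : A.det = 1 := by simp [A]
  have hcomb : Sum.elim v x = fun k ↦ ∑ i, A i k • Sum.elim v w i := by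
    ext (i | k)
    · simp [A, one_apply]
    · simp [A, one_apply, hc]
  rw [hcomb, gram_sum_smul, det_mul, det_mul, det_conjTranspose, hA,
    gram_sumElim_of_inner_eq_zero hvw, det_fromBlocks_zero₂₁, star_one, one_mul, mul_one]

theorem det_gram_snoc {n : ℕ} (v : Fin n → E) (x : E)
    [(Submodule.span 𝕜 (Set.range v)).HasOrthogonalProjection] :
    (gram 𝕜 (Fin.snoc v x : Fin (n + 1) → E)).det =
      (gram 𝕜 v).det *
        (‖(Submodule.span 𝕜 (Set.range v))ᗮ.orthogonalProjectionOnto x‖ : 𝕜) ^ 2 := by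
  set V := Submodule.span 𝕜 (Set.range v)
  set w := Vᗮ.orthogonalProjectionOnto x
  have hsnoc : (Fin.snoc v x : Fin (n + 1) → E) ∘ finSumFinEquiv = Sum.elim v fun _ ↦ x := by
    ext (i | k)
    · exact Fin.snoc_castSucc (α := fun _ ↦ E) x v i
    · rw [Subsingleton.elim k 0]
      exact Fin.snoc_last (α := fun _ ↦ E) x v
  have hvw (i : Fin n) : inner 𝕜 (v i) (w : E) = 0 :=
    (V.mem_orthogonal _).1 w.2 _ (Submodule.subset_span ⟨i, rfl⟩)
  have hxw : x - w ∈ V := by simp [w]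
  calc (gram 𝕜 (Fin.snoc v x : Fin (n + 1) → E)).det
    _ = (gram 𝕜 (Sum.elim v fun _ : Fin 1 ↦ x)).det := by
      rw [← hsnoc, ← det_submatrix_equiv_self finSumFinEquiv]
      rfl
    _ = (gram 𝕜 v).det * (gram 𝕜 fun _ : Fin 1 ↦ (w : E)).det :=
      det_gram_sumElim_of_sub_mem_span (fun i _ ↦ hvw i) fun _ ↦ hxw
    _ = (gram 𝕜 v).det * (‖w‖ : 𝕜) ^ 2 := by
      rw [det_fin_one, gram_apply, inner_self_eq_norm_sq_to_K, Submodule.coe_norm]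

theorem gram_toLp {q : Type*} [Fintype q] (X : ι → q → 𝕜) :
    gram 𝕜 (fun i ↦ WithLp.toLp 2 (X i)) = (of X * (of X)ᴴ)ᵀ := by
  ext i j
  simp [PiLp.inner_apply, mul_apply]

theorem finrank_orthogonal_span_range [FiniteDimensional 𝕜 E] [Fintype ι] {v : ι → E}
    (hv : LinearIndependent 𝕜 v) :
    finrank 𝕜 (Submodule.span 𝕜 (Set.range v))ᗮ = finrank 𝕜 E - Fintype.card ι := by
  rw [← (Submodule.span 𝕜 (Set.range v)).finrank_add_finrank_orthogonal, finrank_span_eq_card hv,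
    Nat.add_sub_cancel_left]

theorem measurable_det_gram [Fintype ι] [DecidableEq ι] [MeasurableSpace E] [BorelSpace E]
    [SecondCountableTopology E] : Measurable fun v : ι → E ↦ (gram 𝕜 v).det := by
  refine (Continuous.matrix_det (continuous_matrix fun i j ↦ ?_)).measurable
  simp only [gram_apply]
  fun_prop

end Gram

section Pi

variable {n : ℕ} {α : Type*} [MeasurableSpace α]

theorem measurePreserving_snoc (μ : Fin (n + 1) → Measure α) [∀ i, SigmaFinite (μ i)] :
    MeasurePreserving (fun p : (Fin n → α) × α ↦ (Fin.snoc p.1 p.2 : Fin (n + 1) → α))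
      ((Measure.pi fun i : Fin n ↦ μ i.castSucc).prod (μ (Fin.last n))) (Measure.pi μ) := by
  have h := (measurePreserving_piFinSuccAbove μ (Fin.last n)).symm.comp
    Measure.measurePreserving_swap
  simpa [MeasurableEquiv.piFinSuccAbove, Fin.snocEquiv, Function.comp_def] using h

variable {M : Type*} [Monoid M] [MeasurableSpace M] [MeasurableMul₂ M]

theorem map_pi_eq_mconv_of_map_snoc {μ : Fin (n + 1) → Measure α} [∀ i, SigmaFinite (μ i)]
    {ν : Measure M} [SFinite ν] {F : (Fin (n + 1) → α) → M} {f : (Fin n → α) → M}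
    (hF : Measurable F) (hf : Measurable f)
    (h : ∀ X, (μ (Fin.last n)).map (fun x ↦ F (Fin.snoc X x)) = ν.map (f X * ·)) :
    (Measure.pi μ).map F = (Measure.pi fun i : Fin n ↦ μ i.castSucc).map f ∗ₘ ν := by
  have hsnoc := measurePreserving_snoc μ
  refine Measure.ext_of_lintegral _ fun g hg ↦ ?_
  have hFsnoc (X : Fin n → α) : Measurable fun x ↦ F (Fin.snoc X x) :=
    hF.comp (hsnoc.measurable.comp measurable_prodMk_left)
  calc ∫⁻ z, g z ∂(Measure.pi μ).map F
    _ = ∫⁻ X, ∫⁻ x, g (F (Fin.snoc X x)) ∂μ (Fin.last n)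
          ∂Measure.pi fun i : Fin n ↦ μ i.castSucc := by
      rw [lintegral_map hg hF, ← hsnoc.lintegral_comp (f := fun X ↦ g (F X)) (hg.comp hF)]
      exact lintegral_prod _ ((hg.comp hF).comp hsnoc.measurable).aemeasurable
    _ = ∫⁻ X, ∫⁻ y, g (f X * y) ∂ν ∂Measure.pi fun i : Fin n ↦ μ i.castSucc := by
      refine lintegral_congr fun X ↦ ?_
      rw [← lintegral_map hg (hFsnoc X), h, lintegral_map hg (measurable_const_mul _)]
    _ = ∫⁻ z, g z ∂((Measure.pi fun i : Fin n ↦ μ i.castSucc).map f ∗ₘ ν) := by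
      rw [Measure.lintegral_mconv hg, lintegral_map (by fun_prop) hf]

theorem map_prod_pi_eq_mconv [CommMonoid α] [MeasurableMul₂ α] (μ : Fin (n + 1) → Measure α)
    [∀ i, SigmaFinite (μ i)] :
    (Measure.pi μ).map (fun x ↦ ∏ i, x i) =
      (Measure.pi fun i : Fin n ↦ μ i.castSucc).map (fun x ↦ ∏ i, x i) ∗ₘ μ (Fin.last n) :=
  map_pi_eq_mconv_of_map_snoc (by fun_prop) (by fun_prop) fun X ↦ by simp only [Fin.prod_snoc]

end Pi

section GramStdGaussian

variable {E : Type*} [NormedAddCommGroup E] [InnerProductSpace ℝ E] [FiniteDimensional ℝ E]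
  [MeasurableSpace E] [BorelSpace E] {n : ℕ}

theorem map_det_gram_snoc_stdGaussian (v : Fin n → E) (hn : n < finrank ℝ E) :
    (stdGaussian E).map (fun x ↦ (gram ℝ (Fin.snoc v x : Fin (n + 1) → E)).det) =
      (chiSqMeasure (finrank ℝ E - n)).map ((gram ℝ v).det * ·) := by
  have := isProbabilityMeasure_chiSqMeasure (sub_pos.2 (Nat.cast_lt (α := ℝ).2 hn))
  set W := (Submodule.span ℝ (Set.range v))ᗮ
  simp_rw [det_gram_snoc]
  by_cases hv : (gram ℝ v).det = 0
  · -- Both laws are the Dirac mass at `0`.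
    simp only [hv, zero_mul, Measure.map_const, measure_univ]
  have hW : finrank ℝ W = finrank ℝ E - n := by
    rw [finrank_orthogonal_span_range (det_gram_ne_zero_iff_linearIndependent.1 hv),
      Fintype.card_fin]
  have : Nontrivial W := nontrivial_of_finrank_pos (R := ℝ) (by omega)
  have hnorm : (stdGaussian E).map (fun x ↦ ‖W.orthogonalProjectionOnto x‖ ^ 2) =
      chiSqMeasure (finrank ℝ E - n) := by
    rw [← Nat.cast_sub hn.le, ← hW, ← map_norm_sq_stdGaussian,
      ← map_orthogonalProjectionOnto_stdGaussian, Measure.map_map (by fun_prop) (by fun_prop)]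
    rfl
  rw [← hnorm, Measure.map_map (by fun_prop) (by fun_prop)]
  rfl

theorem map_det_gram_pi_stdGaussian (hn : n ≤ finrank ℝ E) :
    (Measure.pi fun _ : Fin n ↦ stdGaussian E).map (fun v ↦ (gram ℝ v).det) =
      (Measure.pi fun j : Fin n ↦ chiSqMeasure (finrank ℝ E - (j : ℕ))).map
        (fun y ↦ ∏ j, y j) := by
  induction n with
  | zero => simp
  | succ n ih =>
    rw [map_pi_eq_mconv_of_map_snoc measurable_det_gram measurable_det_gram
      fun v ↦ map_det_gram_snoc_stdGaussian v hn, ih (Nat.le_of_succ_le hn), map_prod_pi_eq_mconv]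
    rfl

end GramStdGaussian

/-- Bartlett-type decomposition of the Wishart determinant: for `1 ≤ n ≤ q` and `X`
an `n × q` matrix of i.i.d. standard Gaussians, the law of `det (X Xᵀ)` equals the
law of the product `∏_{j<n} y j` where the `y j` are independent chi-squared random
variables with `q − j` degrees of freedom (Gamma with shape `(q-j)/2`, rate `1/2`). -/
theorem wishart_det_eq_prod_chiSq {n q : ℕ} (hn : 1 ≤ n) (hnq : n ≤ q) :
    Measure.map (fun X : Fin n → Fin q → ℝ => (Matrix.of X * (Matrix.of X)ᵀ).det)
        (Measure.pi fun _ : Fin n => Measure.pi fun _ : Fin q => gaussianReal 0 1) =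
      Measure.map (fun y : Fin n → ℝ => ∏ j, y j)
        (Measure.pi fun j : Fin n => gammaMeasure (((q : ℝ) - (j : ℕ)) / 2) (1 / 2)) := by
  have hE : finrank ℝ (EuclideanSpace ℝ (Fin q)) = q := by simp
  have hdet := map_det_gram_pi_stdGaussian (E := EuclideanSpace ℝ (Fin q)) (hnq.trans_eq hE.symm)
  rw [hE, ← map_pi_eq_stdGaussian, ← Measure.pi_map_pi (by fun_prop),
    Measure.map_map measurable_det_gram (by fun_prop)] at hdet
  simpa only [Function.comp_def, gram_toLp, det_transpose, conjTranspose_eq_transpose_of_trivial,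
    chiSqMeasure] using hdet
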